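/- Assume there exist a constant 0 < θ < 1 and a positive integer N_θ such that p_{n+1} − p_n ≤ p_n^θ for all n ≥ N_θ. Let 1/2 < t < 1, and let M be a positive integer with M ≥ max{ 4^{1/(1-t)}·(20·2^{6t−t²}(2t−1)/(3(1−t)²(1−2^{1−2t})))^{2/(t(1-t))}, (50·(6/5)^{t(2-t)})^{2/(1-t)} }, and let N₀ be a positive integer with N₀ ≥ max{ N_θ, 85536·M⁵, 3×10^{18}, 2e^{16/(1-t)⁴}, 1/(1−2^{−1/(2t−1)}), M^{1/(1-t)²}, ((40/7)(1−t)²)^{2/t}·(2^{1+2t}/(2t−1))^{(2−t)/t}·M^{(1+t)/t}, e^{1/((2t−1)(1−t))} }. Then for any positive integer n₀ ≥ N₀, the squares of sidelength p_n^{-t} for n ≥ n₀ can be packed perfectly into a square of area ∑_{n=n₀}^{∞} p_n^{-2t}. -/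

import Mathlib

open Set MeasureTheory

/-- The `n`-th prime number, 1-indexed: `nthPrime 1 = 2`, `nthPrime 2 = 3`, ... -/
noncomputable def nthPrime (n : ℕ) : ℕ := Nat.nth Nat.Prime (n - 1)

/-- The axis-parallel square with lower-left corner `c` and sidelength `s`. -/
noncomputable def square (c : ℝ × ℝ) (s : ℝ) : Set (ℝ × ℝ) :=
  Set.Icc c.1 (c.1 + s) ×ˢ Set.Icc c.2 (c.2 + s)

/-- The family of sets `S i` is packed perfectly into `Ω`: the sets are contained in `Ω`,
have pairwise disjoint interiors, and cover `Ω` up to a Lebesgue-null set. -/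
def PerfectlyPacked {ι : Type*} (S : ι → Set (ℝ × ℝ)) (Ω : Set (ℝ × ℝ)) : Prop :=
  (∀ i, S i ⊆ Ω) ∧
  (Pairwise fun i j => Disjoint (interior (S i)) (interior (S j))) ∧
  volume (Ω \ ⋃ i, S i) = 0

/-- An axis-parallel rectangle, given by its lower-left corner and its side lengths. -/
abbrev Rect := (ℝ × ℝ) × (ℝ × ℝ)

namespace Rect

/-- The rectangles lie on different sides of some axis-parallel line. -/
def Sep (R R' : Rect) : Prop :=
  R.1.1 + R.2.1 ≤ R'.1.1 ∨ R'.1.1 + R'.2.1 ≤ R.1.1 ∨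
    R.1.2 + R.2.2 ≤ R'.1.2 ∨ R'.1.2 + R'.2.2 ≤ R.1.2

/-- The first rectangle is contained in the second one. -/
def Sub (R R' : Rect) : Prop :=
  R'.1.1 ≤ R.1.1 ∧ R.1.1 + R.2.1 ≤ R'.1.1 + R'.2.1 ∧
    R'.1.2 ≤ R.1.2 ∧ R.1.2 + R.2.2 ≤ R'.1.2 + R'.2.2

lemma Sep.symm {R R' : Rect} (h : Sep R R') : Sep R' R := by
  unfold Sep at *; tauto

lemma Sub.refl (R : Rect) : Sub R R := ⟨le_rfl, le_rfl, le_rfl, le_rfl⟩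

lemma Sub.trans {R R' R'' : Rect} (h : Sub R R') (h' : Sub R' R'') : Sub R R'' :=
  ⟨h'.1.trans h.1, h.2.1.trans h'.2.1, h'.2.2.1.trans h.2.2.1, h.2.2.2.trans h'.2.2.2⟩

lemma Sep.mono {R R' Q Q' : Rect} (h : Sep R R') (hQ : Sub Q R) (hQ' : Sub Q' R') :
    Sep Q Q' := by
  obtain ⟨a, b, c, d⟩ := hQ
  obtain ⟨a', b', c', d'⟩ := hQ'
  rcases h with h | h | h | h
  · exact Or.inl (by linarith)
  · exact Or.inr (Or.inl (by linarith))
  · exact Or.inr (Or.inr (Or.inl (by linarith)))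
  · exact Or.inr (Or.inr (Or.inr (by linarith)))

end Rect

/-- The squares of side lengths `s k`, `k ∈ S`, can be packed into disjoint rectangles whose
dimensions are listed in the multiset, by successively cutting rectangles into two pieces. -/
inductive Packs (s : ℕ → ℝ) : Multiset (ℝ × ℝ) → Finset ℕ → Prop
  | empty (L) : Packs s L ∅
  | square {L S k} : k ∉ S → Packs s L S → Packs s ((s k, s k) ::ₘ L) (insert k S)
  | cutWidth {L S a b h} : 0 ≤ a → 0 ≤ b → Packs s ((a, h) ::ₘ (b, h) ::ₘ L) S →
      Packs s ((a + b, h) ::ₘ L) S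
  | cutHeight {L S w a b} : 0 ≤ a → 0 ≤ b → Packs s ((w, a) ::ₘ (w, b) ::ₘ L) S →
      Packs s ((w, a + b) ::ₘ L) S

namespace Packs

/-- A placement of the squares of side lengths `s k`, `k ∈ S`, with lower-left corners `pos k`
into the rectangles of the list `l`. -/
def IsPlacement (s : ℕ → ℝ) (l : List Rect) (S : Finset ℕ) (pos : ℕ → ℝ × ℝ) : Prop :=
  (∀ k ∈ S, ∃ R ∈ l, Rect.Sub (pos k, (s k, s k)) R) ∧
    ∀ i ∈ S, ∀ j ∈ S, i ≠ j → Rect.Sep (pos i, (s i, s i)) (pos j, (s j, s j))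

lemma IsPlacement.mono {s : ℕ → ℝ} {l l' : List Rect} {S : Finset ℕ} {pos : ℕ → ℝ × ℝ}
    (h : IsPlacement s l S pos) (hl : ∀ R ∈ l, ∃ R' ∈ l', Rect.Sub R R') :
    IsPlacement s l' S pos := by
  refine ⟨fun k hk => ?_, h.2⟩
  obtain ⟨R, hR, hs⟩ := h.1 k hk
  obtain ⟨R', hR', hs'⟩ := hl R hR
  exact ⟨R', hR', hs.trans hs'⟩

lemma exists_perm_cons {l : List Rect} {d : ℝ × ℝ} {L : Multiset (ℝ × ℝ)}
    (hl : ((l.map Prod.snd : List (ℝ × ℝ)) : Multiset (ℝ × ℝ)) = d ::ₘ L) :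
    ∃ (c : ℝ × ℝ) (l' : List Rect), l.Perm ((c, d) :: l') ∧
      ((l'.map Prod.snd : List (ℝ × ℝ)) : Multiset (ℝ × ℝ)) = L := by
  have hd : d ∈ l.map Prod.snd := by
    rw [← Multiset.mem_coe, hl]; exact Multiset.mem_cons_self _ _
  obtain ⟨⟨c, d'⟩, hR, rfl⟩ := List.mem_map.1 hd
  have hp := List.perm_cons_erase hR
  refine ⟨c, _, hp, ?_⟩
  have h2 := Multiset.coe_eq_coe.2 (hp.map Prod.snd)
  rw [hl, List.map_cons, ← Multiset.cons_coe, Multiset.cons_inj_right] at h2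
  exact h2.symm

lemma exists_placement_of_split {s : ℕ → ℝ} {L : Multiset (ℝ × ℝ)} {S : Finset ℕ}
    {d d₁ d₂ : ℝ × ℝ}
    (ih : ∀ l : List Rect, ((l.map Prod.snd : List (ℝ × ℝ)) : Multiset (ℝ × ℝ)) =
      d₁ ::ₘ d₂ ::ₘ L → l.Pairwise Rect.Sep → ∃ pos, IsPlacement s l S pos)
    (hsplit : ∀ c, ∃ c₁ c₂, Rect.Sub (c₁, d₁) (c, d) ∧ Rect.Sub (c₂, d₂) (c, d) ∧
      Rect.Sep (c₁, d₁) (c₂, d₂))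
    {l : List Rect} (hl : ((l.map Prod.snd : List (ℝ × ℝ)) : Multiset (ℝ × ℝ)) = d ::ₘ L)
    (hp : l.Pairwise Rect.Sep) : ∃ pos, IsPlacement s l S pos := by
  obtain ⟨c, l', hperm, hl'⟩ := exists_perm_cons hl
  obtain ⟨c₁, c₂, h₁, h₂, h₁₂⟩ := hsplit c
  have hp' := (hperm.pairwise_iff fun h => Rect.Sep.symm h).1 hp
  rw [List.pairwise_cons] at hp'
  obtain ⟨pos, hpos⟩ := ih ((c₁, d₁) :: (c₂, d₂) :: l') (by simp [← hl']) (by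
    refine List.pairwise_cons.2 ⟨fun R hR => ?_, List.pairwise_cons.2 ⟨fun R hR => ?_, hp'.2⟩⟩
    · rcases List.mem_cons.1 hR with rfl | hR
      · exact h₁₂
      · exact (hp'.1 R hR).mono h₁ (.refl _)
    · exact (hp'.1 R hR).mono h₂ (.refl _))
  refine ⟨pos, hpos.mono fun R hR => ?_⟩
  simp only [List.mem_cons] at hR
  rcases hR with rfl | rfl | hR
  · exact ⟨_, hperm.mem_iff.2 List.mem_cons_self, h₁⟩
  · exact ⟨_, hperm.mem_iff.2 List.mem_cons_self, h₂⟩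
  · exact ⟨R, hperm.mem_iff.2 (List.mem_cons_of_mem _ hR), .refl _⟩

theorem exists_placement {s : ℕ → ℝ} {L : Multiset (ℝ × ℝ)} {S : Finset ℕ} (h : Packs s L S) :
    ∀ l : List Rect, ((l.map Prod.snd : List (ℝ × ℝ)) : Multiset (ℝ × ℝ)) = L →
      l.Pairwise Rect.Sep → ∃ pos, IsPlacement s l S pos := by
  induction h with
  | empty L => exact fun l _ _ => ⟨fun _ => 0, by simp [IsPlacement]⟩
  | @square L S k hk _ ih =>
    intro l hl hp
    obtain ⟨c, l', hperm, hl'⟩ := exists_perm_cons hl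
    have hp' := (hperm.pairwise_iff fun h => Rect.Sep.symm h).1 hp
    rw [List.pairwise_cons] at hp'
    obtain ⟨pos, hsub, hsep⟩ := ih l' hl' hp'.2
    have hne : ∀ i ∈ S, Function.update pos k c i = pos i := fun i hi =>
      Function.update_of_ne (by rintro rfl; exact hk hi) _ _
    have hk' : ∀ i ∈ S, Rect.Sep (c, (s k, s k)) (pos i, (s i, s i)) := fun i hi => by
      obtain ⟨R, hR, hRs⟩ := hsub i hi
      exact (hp'.1 R hR).mono (.refl _) hRs
    refine ⟨Function.update pos k c, fun i hi => ?_, fun i hi j hj hij => ?_⟩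
    · rcases Finset.mem_insert.1 hi with rfl | hi
      · exact ⟨_, hperm.mem_iff.2 List.mem_cons_self, by simpa using Rect.Sub.refl _⟩
      · obtain ⟨R, hR, hRs⟩ := hsub i hi
        rw [hne i hi]
        exact ⟨R, hperm.mem_iff.2 (List.mem_cons_of_mem _ hR), hRs⟩
    · rcases Finset.mem_insert.1 hi with rfl | hi' <;>
        rcases Finset.mem_insert.1 hj with rfl | hj'
      · exact absurd rfl hij
      · rw [hne j hj']; simpa using hk' j hj'
      · rw [hne i hi']; simpa using (hk' i hi').symm
      · rw [hne i hi', hne j hj']; exact hsep i hi' j hj' hij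
  | @cutWidth L S a b h ha hb _ ih =>
    intro l hl hp
    refine exists_placement_of_split ih (fun c => ⟨c, (c.1 + a, c.2), ?_⟩) hl hp
    simp only [Rect.Sub, Rect.Sep]
    refine ⟨?_, ?_, ?_⟩ <;> simp [ha, hb, add_assoc]
  | @cutHeight L S w a b ha hb _ ih =>
    intro l hl hp
    refine exists_placement_of_split ih (fun c => ⟨c, (c.1, c.2 + a), ?_⟩) hl hp
    simp only [Rect.Sub, Rect.Sep]
    refine ⟨?_, ?_, ?_⟩ <;> simp [ha, hb, add_assoc]

/-- Packing a row of consecutive squares along the width of a rectangle. -/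
lemma of_row {s : ℕ → ℝ} (hs : ∀ k, 0 ≤ s k) {k N : ℕ} {w c : ℝ} (hc : ∀ j, k ≤ j → s j ≤ c)
    (m : ℕ) (hm : k + m ≤ N) (hw : ∑ j ∈ Finset.Ico k (k + m), s j ≤ w) (L : Multiset (ℝ × ℝ))
    (h : Packs s ((w - ∑ j ∈ Finset.Ico k (k + m), s j, c) ::ₘ
      ((Finset.Ico k (k + m)).val.map (fun j => (s j, c - s j)) + L)) (Finset.Ico (k + m) N)) :
    Packs s ((w, c) ::ₘ L) (Finset.Ico k N) := by
  induction m generalizing L with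
  | zero => simpa using h
  | succ m ih =>
    have hsum : ∑ j ∈ Finset.Ico k (k + (m + 1)), s j =
        (∑ j ∈ Finset.Ico k (k + m), s j) + s (k + m) := by
      rw [← add_assoc, Finset.sum_Ico_succ_top (by omega)]
    have hval : (Finset.Ico k (k + (m + 1))).val = (k + m) ::ₘ (Finset.Ico k (k + m)).val := by
      rw [← add_assoc, ← Finset.insert_Ico_right_eq_Ico_add_one (by omega),
        Finset.insert_val_of_notMem (by simp)]
    rw [hsum] at h hw
    refine ih (by omega) (by linarith [hs (k + m)]) L ?_
    have e1 : w - ∑ j ∈ Finset.Ico k (k + m), s j =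
      s (k + m) + (w - (∑ j ∈ Finset.Ico k (k + m), s j + s (k + m))) := by ring
    have e2 : Finset.Ico (k + m) N = insert (k + m) (Finset.Ico (k + (m + 1)) N) := by
      rw [← add_assoc, Finset.insert_Ico_add_one_left_eq_Ico (by omega)]
    rw [e1, e2]
    refine cutWidth (hs _) (by linarith) ?_
    have e3 : ∀ X, Packs s ((s (k + m), s (k + m) + (c - s (k + m))) ::ₘ X)
        (insert (k + m) (Finset.Ico (k + (m + 1)) N)) →
        Packs s ((s (k + m), c) ::ₘ X) (insert (k + m) (Finset.Ico (k + (m + 1)) N)) := by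
      intro X hX
      rwa [show s (k + m) + (c - s (k + m)) = c by ring] at hX
    refine e3 _ (cutHeight (hs _) (by linarith [hc (k + m) (by omega)]) (square (by simp) ?_))
    rw [hval, Multiset.map_cons, Multiset.cons_add, Multiset.cons_swap] at h
    exact h

end Packs
/-- A symmetric weighted perimeter of a rectangle, comparable to its longer side times the `δ`-th
power of its shorter side. -/
noncomputable def weightedPerimeter (δ : ℝ) (d : ℝ × ℝ) : ℝ := d.1 ^ δ * d.2 + d.1 * d.2 ^ δ

section WeightedPerimeter

variable {δ : ℝ}

lemma weightedPerimeter_mono (hδ : 0 ≤ δ) {x y x' y' : ℝ} (hx : 0 ≤ x) (hy : 0 ≤ y)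
    (hxx : x ≤ x') (hyy : y ≤ y') :
    weightedPerimeter δ (x, y) ≤ weightedPerimeter δ (x', y') := by
  have h₁ := Real.rpow_le_rpow hx hxx hδ
  have h₂ := Real.rpow_le_rpow hy hyy hδ
  have h₃ := Real.rpow_nonneg hx δ
  have h₄ := Real.rpow_nonneg hy δ
  have hx' := hx.trans hxx
  have hy' := hy.trans hyy
  have h₅ := Real.rpow_nonneg hx' δ
  unfold weightedPerimeter
  gcongr

lemma mul_rpow_self {c : ℝ} (hc : 0 < c) : c * c ^ δ = c ^ (1 + δ) := by
  rw [Real.rpow_add hc, Real.rpow_one]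

lemma weightedPerimeter_le_of_le (hδ : 0 ≤ δ) {x y c : ℝ} (hc : 0 < c) (hx : 0 ≤ x) (hy : 0 ≤ y)
    (hxc : x ≤ c) (hyc : y ≤ c) : weightedPerimeter δ (x, y) ≤ 2 * c ^ (1 + δ) := by
  refine (weightedPerimeter_mono hδ hx hy hxc hyc).trans (le_of_eq ?_)
  rw [← mul_rpow_self hc, weightedPerimeter]; ring

lemma weightedPerimeter_sliver_le (hδ : 0 < δ) (hδ₁ : δ ≤ 1) {A Λ u v c : ℝ}
    (hΛ : 0 ≤ Λ) (hpow : ∀ x, 0 ≤ x → x ≤ 1 → x ^ δ ≤ A + Λ * x)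
    (hv : 0 < v) (hvu : v ≤ u) (huc : u ≤ c) :
    weightedPerimeter δ (u, c - u) ≤
      2 * A * c ^ (1 + δ) + 2 * Λ * (c ^ (1 + δ) - v ^ (1 + δ)) := by
  have hu : 0 < u := hv.trans_le hvu
  have hc : 0 < c := hu.trans_le huc
  set x := 1 - u / c with hx
  have hx0 : 0 ≤ x := by rw [hx, sub_nonneg, div_le_one hc]; exact huc
  have hx1 : x ≤ 1 := by rw [hx]; linarith [div_pos hu hc]
  have hxc : c - u = x * c := by rw [hx]; field_simp
  have h₁ : weightedPerimeter δ (u, c - u) ≤ weightedPerimeter δ (c, x * c) := by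
    rw [hxc]; exact weightedPerimeter_mono hδ.le hu.le (by positivity) huc le_rfl
  have h₂ : weightedPerimeter δ (c, x * c) = (x + x ^ δ) * c ^ (1 + δ) := by
    rw [weightedPerimeter, Real.mul_rpow hx0 hc.le, ← mul_rpow_self hc]; ring
  have hc' : 0 < c ^ (1 + δ) := Real.rpow_pos_of_pos hc _
  have h₃ : x ≤ x ^ δ := by
    simpa using Real.rpow_le_rpow_of_exponent_ge_of_imp hx0 hx1 hδ₁ (by intro _ h; linarith)
  have h₄ : (x + x ^ δ) ≤ 2 * (A + Λ * x) := by linarith [hpow x hx0 hx1]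
  have h₅ : x * c ^ (1 + δ) ≤ c ^ (1 + δ) - v ^ (1 + δ) := by
    have e₁ : v ^ (1 + δ) ≤ u * c ^ δ := by
      rw [← mul_rpow_self hv]
      have := Real.rpow_le_rpow hv.le (hvu.trans huc) hδ.le
      have := Real.rpow_nonneg hv.le δ
      gcongr
    have e₂ : x * c ^ (1 + δ) = c ^ (1 + δ) - u * c ^ δ := by
      rw [← mul_rpow_self hc, hx]; field_simp
    linarith
  calc weightedPerimeter δ (u, c - u) ≤ (x + x ^ δ) * c ^ (1 + δ) := h₁.trans h₂.le
    _ ≤ 2 * (A + Λ * x) * c ^ (1 + δ) := by gcongr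
    _ = 2 * A * c ^ (1 + δ) + 2 * Λ * (x * c ^ (1 + δ)) := by ring
    _ ≤ _ := by gcongr

lemma area_le_mul_weightedPerimeter (hδ₁ : δ ≤ 1) {x y c : ℝ} (hx : 0 ≤ x)
    (hy : 0 ≤ y) (h : x ≤ c ∨ y ≤ c) : x * y ≤ c ^ (1 - δ) * weightedPerimeter δ (x, y) := by
  have key : ∀ {x y : ℝ}, 0 ≤ x → 0 ≤ y → x ≤ c → x * y ≤ c ^ (1 - δ) * (x ^ δ * y) := by
    intro x y hx hy hxc
    rcases hx.eq_or_lt with rfl | hx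
    · rw [zero_mul]
      have := Real.rpow_nonneg hxc (1 - δ)
      have := Real.rpow_nonneg le_rfl δ
      positivity
    · have e : x = x ^ (1 - δ) * x ^ δ := by rw [← Real.rpow_add hx]; simp
      calc x * y = x ^ (1 - δ) * (x ^ δ * y) := by rw [← mul_assoc, ← e]
        _ ≤ _ := by
          have := Real.rpow_nonneg hx.le δ
          gcongr
  have hxδ := Real.rpow_nonneg hx δ
  have hyδ := Real.rpow_nonneg hy δ
  rw [weightedPerimeter, mul_add]
  rcases h with h | h
  · have := key hx hy h
    have := Real.rpow_nonneg (hx.trans h) (1 - δ)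
    have : 0 ≤ c ^ (1 - δ) * (x * y ^ δ) := by positivity
    linarith
  · have := key hy hx h
    have := Real.rpow_nonneg (hy.trans h) (1 - δ)
    have : 0 ≤ c ^ (1 - δ) * (x ^ δ * y) := by positivity
    linarith

end WeightedPerimeter

/-- A budget for the weighted perimeter spent on the squares with indices in `[n₀, k)`. -/
noncomputable def budget (δ : ℝ) (s : ℕ → ℝ) (n₀ k : ℕ) : ℝ :=
  n₀ * s n₀ ^ (1 + δ) + ∑ j ∈ Finset.Ico n₀ k, s j ^ (1 + δ)

/-- Quantitative slow decay of the side lengths `s k`, `k ≥ n₀`, sufficient for packing the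
corresponding squares row by row into a square of side length `a`. -/
structure SlowDecay (δ D M Λ a : ℝ) (s : ℕ → ℝ) (n₀ : ℕ) : Prop where
  δ_pos : 0 < δ
  δ_le : δ ≤ 1
  two_le_M : 2 ≤ M
  one_le_Λ : 1 ≤ Λ
  D_pos : 0 < D
  a_pos : 0 < a
  rpow_le : ∀ x, 0 ≤ x → x ≤ 1 → x ^ δ ≤ 1 / M + Λ * x
  pos : ∀ k, 0 < s k
  anti : Antitone s
  doubling : ∀ k j, n₀ ≤ k → k ≤ j → j ≤ 2 * k → s k ^ (1 + δ) ≤ D * s j ^ (1 + δ)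
  wide : ∀ k, n₀ ≤ k → (M * s k) ^ (1 - δ) * (7 * D / M * budget δ s n₀ k) <
    a ^ 2 - ∑ j ∈ Finset.Ico n₀ k, s j ^ 2
  narrow : ∀ k, n₀ ≤ k → 2 * Λ * M * a ≤ k * s (2 * k)

/-- The invariant of the row by row packing algorithm: `L` lists the dimensions of the rectangles
left over after packing the squares with indices in `[n₀, k)`. -/
structure Leftover (δ D M a : ℝ) (s : ℕ → ℝ) (n₀ k : ℕ) (L : Multiset (ℝ × ℝ)) : Prop where
  le : n₀ ≤ k
  dims : ∀ R ∈ L, 0 ≤ R.1 ∧ R.1 ≤ a ∧ 0 ≤ R.2 ∧ R.2 ≤ a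
  area : (L.map fun R => R.1 * R.2).sum = a ^ 2 - ∑ j ∈ Finset.Ico n₀ k, s j ^ 2
  perimeter : (L.map (weightedPerimeter δ)).sum + k * s k ^ (1 + δ) / M ≤
    7 * D / M * budget δ s n₀ k

namespace SlowDecay

variable {δ D M Λ a : ℝ} {s : ℕ → ℝ} {n₀ : ℕ}

lemma exists_wide (H : SlowDecay δ D M Λ a s n₀) {k : ℕ} {L : Multiset (ℝ × ℝ)}
    (hL : Leftover δ D M a s n₀ k L) : ∃ R ∈ L, M * s k ≤ R.1 ∧ M * s k ≤ R.2 := by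
  by_contra! hcon
  have hM : 0 < M := by linarith [H.two_le_M]
  have hsk := H.pos k
  have h₁ : (L.map fun R => R.1 * R.2).sum ≤
      (L.map fun R => (M * s k) ^ (1 - δ) * weightedPerimeter δ R).sum := by
    refine Multiset.sum_map_le_sum_map _ _ fun R hR => ?_
    obtain ⟨h0, -, h0', -⟩ := hL.dims R hR
    refine area_le_mul_weightedPerimeter H.δ_le h0 h0' ?_
    by_cases h : M * s k ≤ R.1
    · exact Or.inr (hcon R hR h).le
    · exact Or.inl (not_le.1 h).le
  rw [Multiset.sum_map_mul_left, hL.area] at h₁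
  have h₂ : (L.map (weightedPerimeter δ)).sum ≤ 7 * D / M * budget δ s n₀ k := by
    have : 0 ≤ k * s k ^ (1 + δ) / M := by positivity
    linarith [hL.perimeter]
  have h₃ : (M * s k) ^ (1 - δ) * (L.map (weightedPerimeter δ)).sum ≤
      (M * s k) ^ (1 - δ) * (7 * D / M * budget δ s n₀ k) := by gcongr
  linarith [H.wide k hL.le]

lemma exists_row_length (H : SlowDecay δ D M Λ a s n₀) {k : ℕ} (hk : n₀ ≤ k) {w : ℝ}
    (hw : M * s k ≤ w) (hwa : w ≤ a) :
    ∃ m : ℕ, 1 ≤ m ∧ m ≤ k ∧ M ≤ 2 * m ∧ 2 * Λ * M * m ≤ k ∧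
      ∑ j ∈ Finset.Ico k (k + m), s j ≤ w ∧
      w - ∑ j ∈ Finset.Ico k (k + m), s j ≤ s k := by
  have hM := H.two_le_M
  have hΛ := H.one_le_Λ
  have hΛM : 1 ≤ Λ * M := by nlinarith
  have hsk := H.pos k
  have hs2 := H.pos (2 * k)
  have hnar := H.narrow k hk
  have lower : ∀ m ≤ k, m * s (2 * k) ≤ ∑ j ∈ Finset.Ico k (k + m), s j := by
    intro m hm
    have := Finset.card_nsmul_le_sum (Finset.Ico k (k + m)) s (s (2 * k)) fun j hj =>
      H.anti (by have := Finset.mem_Ico.1 hj; omega)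
    simpa using this
  have hex : ∃ m, w < ∑ j ∈ Finset.Ico k (k + m + 1), s j := by
    refine ⟨k, ?_⟩
    rw [Finset.sum_Ico_succ_top (by omega)]
    have := H.pos (k + k)
    nlinarith [lower k le_rfl, H.a_pos]
  classical
  set m := Nat.find hex with hm
  have hmax : w < ∑ j ∈ Finset.Ico k (k + m + 1), s j := Nat.find_spec hex
  have hw0 : 0 ≤ w := le_trans (by positivity) hw
  have hsum : ∑ j ∈ Finset.Ico k (k + m), s j ≤ w := by
    rcases Nat.eq_zero_or_pos m with h0 | h0
    · simpa [h0] using hw0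
    · have := Nat.find_min hex (m := m - 1) (by omega)
      rw [show k + (m - 1) + 1 = k + m by omega] at this
      exact not_lt.1 this
  have hmk : m ≤ k := by
    by_contra! hlt
    have h₁ := lower k le_rfl
    have h₂ : ∑ j ∈ Finset.Ico k (k + k), s j < ∑ j ∈ Finset.Ico k (k + m), s j :=
      Finset.sum_lt_sum_of_subset (Finset.Ico_subset_Ico le_rfl (by omega))
        (i := k + k) (by simp; omega) (by simp) (H.pos _) fun j _ _ => (H.pos j).le
    nlinarith [H.a_pos]
  have upper : ∑ j ∈ Finset.Ico k (k + m + 1), s j ≤ (m + 1) * s k := by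
    have := Finset.sum_le_card_nsmul (Finset.Ico k (k + m + 1)) s (s k) fun j hj =>
      H.anti (Finset.mem_Ico.1 hj).1
    simpa [add_assoc] using this
  have hMm : M < m + 1 := by
    by_contra! h
    nlinarith
  refine ⟨m, ?_, hmk, by linarith, ?_, hsum, ?_⟩
  · have : (1 : ℝ) < m := by linarith
    exact_mod_cast this.le
  · have h₁ := lower m hmk
    have h₂ : 2 * Λ * M * m * s (2 * k) ≤ k * s (2 * k) := by nlinarith
    exact le_of_mul_le_mul_right h₂ hs2
  · rw [Finset.sum_Ico_succ_top (by omega)] at hmax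
    linarith [H.anti (show k ≤ k + m by omega)]

lemma exists_row (H : SlowDecay δ D M Λ a s n₀) {k : ℕ} {L : Multiset (ℝ × ℝ)}
    (hL : Leftover δ D M a s n₀ k L) : ∃ (m : ℕ) (L' : Multiset (ℝ × ℝ)), 1 ≤ m ∧
      Leftover δ D M a s n₀ (k + m) L' ∧
      ∀ N, k + m ≤ N → Packs s L' (Finset.Ico (k + m) N) → Packs s L (Finset.Ico k N) := by
  obtain ⟨⟨w, h⟩, hR, hw, hh⟩ := H.exists_wide hL
  obtain ⟨hw0, hwa, hh0, hha⟩ := hL.dims _ hR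
  obtain ⟨L, rfl⟩ := Multiset.exists_cons_of_mem hR
  dsimp only at hw hh hw0 hwa hh0 hha
  obtain ⟨m, hm1, hmk, hMm, hΛm, hsum, hgap⟩ := H.exists_row_length hL.le hw hwa
  have hM := H.two_le_M
  have hM0 : 0 < M := by linarith
  have hΛ := H.one_le_Λ
  have hD := H.D_pos
  have hsk := H.pos k
  have hskh : s k ≤ h := by nlinarith
  set T := ∑ j ∈ Finset.Ico k (k + m), s j with hT
  have hT0 : 0 ≤ T := Finset.sum_nonneg fun j _ => (H.pos j).le
  have hanti : ∀ j ∈ Finset.Ico k (k + m), s j ≤ s k := fun j hj =>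
    H.anti (Finset.mem_Ico.1 hj).1
  refine ⟨m, (w - T, s k) ::ₘ ((Finset.Ico k (k + m)).val.map (fun j => (s j, s k - s j)) +
    ((w, h - s k) ::ₘ L)), hm1, ⟨hL.le.trans (by omega), ?_, ?_, ?_⟩, ?_⟩
  · intro R hR
    simp only [Multiset.mem_cons, Multiset.mem_add, Multiset.mem_map, Finset.mem_val] at hR
    have hska : s k ≤ a := hskh.trans hha
    rcases hR with rfl | ⟨j, hj, rfl⟩ | rfl | hR
    · exact ⟨by dsimp only; linarith, by dsimp only; linarith, hsk.le, hska⟩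
    · have := hanti j hj
      have := H.pos j
      exact ⟨this.le, by dsimp only; linarith, by dsimp only; linarith, by dsimp only; linarith⟩
    · exact ⟨hw0, hwa, by dsimp only; linarith, by dsimp only; linarith⟩
    · exact hL.dims R (Multiset.mem_cons_of_mem hR)
  · have hA := hL.area
    simp only [Multiset.map_cons, Multiset.sum_cons, Multiset.map_add, Multiset.sum_add,
      Multiset.map_map, Function.comp_def, Finset.sum_map_val] at hA ⊢
    rw [← Finset.sum_Ico_consecutive _ hL.le (show k ≤ k + m by omega)]
    have : ∑ j ∈ Finset.Ico k (k + m), s j * (s k - s j) =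
        s k * T - ∑ j ∈ Finset.Ico k (k + m), s j ^ 2 := by
      rw [hT, Finset.mul_sum, ← Finset.sum_sub_distrib]
      exact Finset.sum_congr rfl fun j _ => by ring
    rw [this]
    linarith
  · have hP := hL.perimeter
    simp only [Multiset.map_cons, Multiset.sum_cons, Multiset.map_add, Multiset.sum_add,
      Multiset.map_map, Function.comp_def, Finset.sum_map_val] at hP ⊢
    set f : ℕ → ℝ := fun j => s j ^ (1 + δ) with hf
    have hfpos : ∀ j, 0 < f j := fun j => Real.rpow_pos_of_pos (H.pos j) _
    have h₁ : weightedPerimeter δ (w - T, s k) ≤ 2 * f k :=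
      weightedPerimeter_le_of_le H.δ_pos.le hsk (by linarith) hsk.le hgap le_rfl
    have h₂ : weightedPerimeter δ (w, h - s k) ≤ weightedPerimeter δ (w, h) :=
      weightedPerimeter_mono H.δ_pos.le hw0 (by linarith) le_rfl (by linarith)
    have h₃ : ∑ j ∈ Finset.Ico k (k + m), weightedPerimeter δ (s j, s k - s j) ≤
        m * (2 * (1 / M) * f k + 2 * Λ * (f k - f (k + m))) := by
      have := Finset.sum_le_card_nsmul (Finset.Ico k (k + m))
        (fun j => weightedPerimeter δ (s j, s k - s j))
        (2 * (1 / M) * f k + 2 * Λ * (f k - f (k + m))) fun j hj =>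
          weightedPerimeter_sliver_le H.δ_pos H.δ_le (by linarith) H.rpow_le (H.pos (k + m))
            (H.anti (Finset.mem_Ico.1 hj).2.le) (hanti j hj)
      simpa only [Nat.card_Ico, nsmul_eq_mul, add_tsub_cancel_left] using this
    have h₄ : budget δ s n₀ (k + m) =
        budget δ s n₀ k + ∑ j ∈ Finset.Ico k (k + m), f j := by
      rw [budget, budget, ← Finset.sum_Ico_consecutive _ hL.le (show k ≤ k + m by omega),
        add_assoc]
    have h₅ : m * f k ≤ D * ∑ j ∈ Finset.Ico k (k + m), f j := by
      rw [Finset.mul_sum]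
      have := Finset.card_nsmul_le_sum (Finset.Ico k (k + m)) (fun j => D * f j) (f k)
        fun j hj => H.doubling k j hL.le (Finset.mem_Ico.1 hj).1
          (by have := Finset.mem_Ico.1 hj; omega)
      simpa using this
    have h₆ : f (k + m) ≤ f k := Real.rpow_le_rpow (H.pos _).le (H.anti (by omega))
      (by linarith [H.δ_pos])
    have h₇ : (m : ℝ) * (2 * Λ * (f k - f (k + m))) ≤ k * (f k - f (k + m)) / M := by
      rw [le_div_iff₀ hM0]
      nlinarith
    have h₈ : 2 * f k ≤ 4 * m * f k / M := by
      rw [le_div_iff₀ hM0]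
      nlinarith [hfpos k]
    have h₉ : m * f (k + m) / M ≤ m * f k / M := by gcongr
    have h₁₀ : 7 * (m * f k) / M ≤ 7 * (D * ∑ j ∈ Finset.Ico k (k + m), f j) / M := by gcongr
    rw [h₄]
    have e₁ : 7 * D / M * (budget δ s n₀ k + ∑ j ∈ Finset.Ico k (k + m), f j) =
        7 * D / M * budget δ s n₀ k + 7 * (D * ∑ j ∈ Finset.Ico k (k + m), f j) / M := by ring
    have e₂ : ((k + m : ℕ) : ℝ) * f (k + m) / M =
        k * f k / M - k * (f k - f (k + m)) / M + m * f (k + m) / M := by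
      push_cast; ring
    have e₃ : (m : ℝ) * (2 * (1 / M) * f k + 2 * Λ * (f k - f (k + m))) =
        2 * m * f k / M + m * (2 * Λ * (f k - f (k + m))) := by ring
    have e₄ : 4 * m * f k / M + 2 * m * f k / M + m * f k / M = 7 * (m * f k) / M := by ring
    change _ + ((k + m : ℕ) : ℝ) * f (k + m) / M ≤ _
    change _ + _ + (k : ℝ) * f k / M ≤ _ at hP
    rw [e₁, e₂]
    rw [e₃] at h₃
    linarith
  · intro N hN hpack
    have e : h = s k + (h - s k) := by ring
    rw [e]
    exact Packs.cutHeight hsk.le (by linarith) (Packs.of_row (fun j => (H.pos j).le)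
      (fun j hj => H.anti hj) m hN hsum _ hpack)

theorem exists_packs (H : SlowDecay δ D M Λ a s n₀) (d : ℕ) :
    ∀ {k : ℕ} {L : Multiset (ℝ × ℝ)}, Leftover δ D M a s n₀ k L →
      ∃ N, k + d ≤ N ∧ Packs s L (Finset.Ico k N) := by
  induction d with
  | zero => exact fun {k L} _ => ⟨k, le_rfl, by simpa using Packs.empty L⟩
  | succ d ih =>
    intro k L hL
    obtain ⟨m, L', hm, hL', hpack⟩ := H.exists_row hL
    obtain ⟨N, hN, hN'⟩ := ih hL'
    exact ⟨N, by omega, hpack N (by omega) hN'⟩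

end SlowDecay
lemma exists_limit_placement {s : ℕ → ℝ} (hs : ∀ k, 0 ≤ s k) {a : ℝ} (ha : 0 ≤ a) {n₀ : ℕ}
    (h : ∀ N, ∃ pos, Packs.IsPlacement s [((0, 0), (a, a))] (Finset.Ico n₀ N) pos) :
    ∃ pos : ℕ → ℝ × ℝ, (∀ k, n₀ ≤ k → Rect.Sub (pos k, (s k, s k)) ((0, 0), (a, a))) ∧
      ∀ i j, n₀ ≤ i → n₀ ≤ j → i ≠ j → Rect.Sep (pos i, (s i, s i)) (pos j, (s j, s j)) := by
  choose pos hsub hsep using h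
  have hsub' : ∀ N, ∀ k ∈ Finset.Ico n₀ N,
      Rect.Sub (pos N k, (s k, s k)) ((0, 0), (a, a)) := by
    intro N k hk
    obtain ⟨R, hR, hRs⟩ := hsub N k hk
    rw [List.mem_singleton] at hR
    exact hR ▸ hRs
  set q : ℕ → ℕ → ℝ × ℝ := fun N k => if k ∈ Finset.Ico n₀ N then pos N k else (0, 0) with hq
  have hqpos : ∀ N, ∀ k ∈ Finset.Ico n₀ N, q N k = pos N k := fun N k hk => if_pos hk
  have hK : IsCompact (Set.univ.pi fun _ : ℕ => Set.Icc (0 : ℝ) a ×ˢ Set.Icc (0 : ℝ) a) :=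
    isCompact_univ_pi fun _ => isCompact_Icc.prod isCompact_Icc
  have hqK : ∀ N, q N ∈ Set.univ.pi fun _ : ℕ => Set.Icc (0 : ℝ) a ×ˢ Set.Icc (0 : ℝ) a := by
    intro N k _
    by_cases hk : k ∈ Finset.Ico n₀ N
    · rw [hqpos N k hk]
      obtain ⟨h1, h2, h3, h4⟩ := hsub' N k hk
      have := hs k
      simp only [zero_add] at h1 h2 h3 h4
      exact ⟨⟨h1, by linarith⟩, ⟨h3, by linarith⟩⟩
    · rw [hq]; dsimp only; rw [if_neg hk]; simp [ha]
  obtain ⟨p, -, φ, hφ, hlim⟩ := hK.tendsto_subseq hqK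
  have hcont : ∀ k, Continuous fun p : ℕ → ℝ × ℝ => p k := fun k => continuous_apply k
  refine ⟨p, fun k hk => ?_, fun i j hi hj hij => ?_⟩
  · have hcl : IsClosed {p : ℕ → ℝ × ℝ | Rect.Sub (p k, (s k, s k)) ((0, 0), (a, a))} := by
      simp only [Rect.Sub, Set.ofPred_and]
      refine (isClosed_le ?_ ?_).inter ((isClosed_le ?_ ?_).inter
        ((isClosed_le ?_ ?_).inter (isClosed_le ?_ ?_))) <;> fun_prop
    refine hcl.mem_of_tendsto hlim (Filter.eventually_atTop.2 ⟨k + 1, fun N hN => ?_⟩)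
    have hm : k ∈ Finset.Ico n₀ (φ N) := by
      have := hφ.id_le N
      simp only [id] at this
      simp; omega
    change Rect.Sub (q (φ N) k, _) _
    rw [hqpos _ _ hm]
    exact hsub' _ k hm
  · have hcl : IsClosed {p : ℕ → ℝ × ℝ | Rect.Sep (p i, (s i, s i)) (p j, (s j, s j))} := by
      simp only [Rect.Sep, Set.ofPred_or]
      refine (isClosed_le ?_ ?_).union ((isClosed_le ?_ ?_).union
        ((isClosed_le ?_ ?_).union (isClosed_le ?_ ?_))) <;> fun_prop
    refine hcl.mem_of_tendsto hlim (Filter.eventually_atTop.2 ⟨i + j + 1, fun N hN => ?_⟩)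
    have := hφ.id_le N
    simp only [id] at this
    have hmi : i ∈ Finset.Ico n₀ (φ N) := by simp; omega
    have hmj : j ∈ Finset.Ico n₀ (φ N) := by simp; omega
    change Rect.Sep (q (φ N) i, _) (q (φ N) j, _)
    rw [hqpos _ _ hmi, hqpos _ _ hmj]
    exact hsep _ i hmi j hmj hij

lemma interior_square (c : ℝ × ℝ) (s : ℝ) : interior (square c s) =
    Set.Ioo c.1 (c.1 + s) ×ˢ Set.Ioo c.2 (c.2 + s) := by
  rw [square, interior_prod_eq, interior_Icc, interior_Icc]

lemma volume_square (c : ℝ × ℝ) {s : ℝ} (hs : 0 ≤ s) :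
    volume (square c s) = ENNReal.ofReal (s ^ 2) := by
  rw [square, Measure.volume_eq_prod, Measure.prod_prod, Real.volume_Icc, Real.volume_Icc,
    add_sub_cancel_left, add_sub_cancel_left, ← ENNReal.ofReal_mul hs, sq]

lemma volume_interior_square (c : ℝ × ℝ) {s : ℝ} (hs : 0 ≤ s) :
    volume (interior (square c s)) = ENNReal.ofReal (s ^ 2) := by
  rw [interior_square, Measure.volume_eq_prod, Measure.prod_prod, Real.volume_Ioo,
    Real.volume_Ioo, add_sub_cancel_left, add_sub_cancel_left, ← ENNReal.ofReal_mul hs, sq]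

lemma disjoint_interior_square_of_sep {c c' : ℝ × ℝ} {s s' : ℝ}
    (h : Rect.Sep (c, (s, s)) (c', (s', s'))) :
    Disjoint (interior (square c s)) (interior (square c' s')) := by
  rw [interior_square, interior_square, Set.disjoint_left]
  rintro ⟨x, y⟩ ⟨⟨h1, h2⟩, ⟨h3, h4⟩⟩ ⟨⟨h5, h6⟩, ⟨h7, h8⟩⟩
  dsimp only at *
  rcases h with h | h | h | h <;> dsimp only at h <;> linarith

/-- A packing of countably many squares whose total area is the area of the ambient square is
perfect. -/
lemma perfectlyPacked_of_tsum {ι : Type*} [Countable ι] {pos : ι → ℝ × ℝ} {s : ι → ℝ}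
    (hs : ∀ i, 0 ≤ s i) (hsum : Summable fun i => s i ^ 2) {c : ℝ × ℝ} {a : ℝ} (ha : 0 ≤ a)
    (ha2 : a ^ 2 = ∑' i, s i ^ 2) (hsub : ∀ i, square (pos i) (s i) ⊆ square c a)
    (hdisj : Pairwise fun i j =>
      Disjoint (interior (square (pos i) (s i))) (interior (square (pos j) (s j)))) :
    PerfectlyPacked (fun i => square (pos i) (s i)) (square c a) := by
  refine ⟨hsub, hdisj, ?_⟩
  have hU : volume (⋃ i, interior (square (pos i) (s i))) = ENNReal.ofReal (a ^ 2) := by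
    rw [measure_iUnion hdisj fun i => isOpen_interior.measurableSet, ha2,
      ENNReal.ofReal_tsum_of_nonneg (fun i => sq_nonneg _) hsum]
    exact tsum_congr fun i => volume_interior_square _ (hs i)
  have hUsub : (⋃ i, interior (square (pos i) (s i))) ⊆ square c a :=
    Set.iUnion_subset fun i => interior_subset.trans (hsub i)
  refine measure_mono_null (t := square c a \ ⋃ i, interior (square (pos i) (s i)))
    (Set.sdiff_subset_sdiff_right (Set.iUnion_mono fun i => interior_subset)) ?_
  rw [measure_sdiff hUsub
    (MeasurableSet.iUnion fun i => isOpen_interior.measurableSet).nullMeasurableSet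
      (by rw [hU]; exact ENNReal.ofReal_ne_top), hU, volume_square c ha, tsub_self]

theorem SlowDecay.exists_perfectlyPacked {δ D M Λ a : ℝ} {s : ℕ → ℝ} {n₀ : ℕ}
    (H : SlowDecay δ D M Λ a s n₀) (hsum : Summable fun k : {k : ℕ // n₀ ≤ k} => s k ^ 2)
    (ha : a ^ 2 = ∑' k : {k : ℕ // n₀ ≤ k}, s k ^ 2)
    (hinit : weightedPerimeter δ (a, a) + n₀ * s n₀ ^ (1 + δ) / M ≤
      7 * D / M * (n₀ * s n₀ ^ (1 + δ))) :
    ∃ pos : {k : ℕ // n₀ ≤ k} → ℝ × ℝ,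
      PerfectlyPacked (fun k => square (pos k) (s k)) (square (0, 0) a) := by
  have hL : Leftover δ D M a s n₀ n₀ {(a, a)} := by
    refine ⟨le_rfl, ?_, ?_, ?_⟩
    · simp [H.a_pos.le]
    · simp [sq]
    · simpa [budget] using hinit
  obtain ⟨pos, hsub, hsep⟩ := exists_limit_placement (fun k => (H.pos k).le) H.a_pos.le
    (n₀ := n₀) fun N => by
      obtain ⟨N', hN', hp⟩ := H.exists_packs N hL
      obtain ⟨pos, h1, h2⟩ := hp.exists_placement [((0, 0), (a, a))] (by simp) (by simp)
      have hmem : ∀ i ∈ Finset.Ico n₀ N, i ∈ Finset.Ico n₀ N' := by simp; omega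
      exact ⟨pos, fun k hk => h1 k (hmem k hk),
        fun i hi j hj => h2 i (hmem i hi) j (hmem j hj)⟩
  refine ⟨fun k => pos k, perfectlyPacked_of_tsum
    (s := fun k : {k : ℕ // n₀ ≤ k} => s k) (fun k => (H.pos k).le) hsum H.a_pos.le ha
    (fun k => ?_) fun i j hij => ?_⟩
  · obtain ⟨h1, h2, h3, h4⟩ := hsub k k.2
    exact Set.prod_mono (Set.Icc_subset_Icc h1 h2) (Set.Icc_subset_Icc h3 h4)
  · exact disjoint_interior_square_of_sep
      (hsep i j i.2 j.2 fun h => hij (Subtype.ext h))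
lemma sub_one_rpow_le {ε : ℝ} (hε : 0 ≤ ε) (hε₁ : ε ≤ 1) {x : ℝ} (hx : 1 ≤ x) :
    (x - 1) ^ ε ≤ x ^ ε - ε * x ^ (ε - 1) := by
  have hx0 : 0 < x := by linarith
  have h := rpow_one_add_le_one_add_mul_self (s := -(1 / x)) (p := ε)
    (by rw [neg_le_neg_iff, div_le_one hx0]; exact hx) hε hε₁
  have e : x - 1 = x * (1 + -(1 / x)) := by field_simp; ring
  have hnn : 0 ≤ 1 + -(1 / x) := by
    have : 1 / x ≤ 1 := by rw [div_le_one hx0]; exact hx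
    linarith
  rw [e, Real.mul_rpow hx0.le hnn, Real.rpow_sub_one hx0.ne']
  calc x ^ ε * (1 + -(1 / x)) ^ ε ≤ x ^ ε * (1 + ε * -(1 / x)) := by gcongr
    _ = _ := by ring

lemma add_mul_rpow_le_sub_one_rpow_neg {η : ℝ} (hη : 0 ≤ η) (hη₁ : η ≤ 1) {x : ℝ} (hx : 1 < x) :
    x ^ (-η) + η * x ^ (-(1 + η)) ≤ (x - 1) ^ (-η) := by
  have hx0 : 0 < x := by linarith
  have hx1 : 0 < x - 1 := by linarith
  have h := sub_one_rpow_le hη hη₁ hx.le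
  have hp : 0 < x ^ η := Real.rpow_pos_of_pos hx0 _
  have hp' : 0 < (x - 1) ^ η := Real.rpow_pos_of_pos hx1 _
  rw [Real.rpow_sub_one hx0.ne'] at h
  rw [Real.rpow_neg hx0.le, Real.rpow_neg hx1.le, Real.rpow_neg hx0.le, Real.rpow_add hx0,
    Real.rpow_one]
  have e : (x ^ η)⁻¹ + η * (x * x ^ η)⁻¹ = (1 + η / x) / x ^ η := by field_simp
  rw [e, inv_eq_one_div, div_le_div_iff₀ hp hp', one_mul]
  have hηx : 0 ≤ η / x := by positivity
  calc (1 + η / x) * (x - 1) ^ η ≤ (1 + η / x) * (x ^ η - η * (x ^ η / x)) := by gcongr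
    _ = (1 - (η / x) ^ 2) * x ^ η := by ring
    _ ≤ 1 * x ^ η := by gcongr; linarith [sq_nonneg (η / x)]
    _ = x ^ η := one_mul _

lemma sum_Ico_rpow_sub_one_le {ε : ℝ} (hε : 0 < ε) (hε₁ : ε ≤ 1) {n k : ℕ} (hn : 1 ≤ n)
    (hnk : n ≤ k) : ∑ j ∈ Finset.Ico n k, (j : ℝ) ^ (ε - 1) ≤ (k : ℝ) ^ ε / ε := by
  suffices h : ∑ j ∈ Finset.Ico n k, (j : ℝ) ^ (ε - 1) ≤ ((k : ℝ) - 1) ^ ε / ε by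
    refine h.trans ?_
    have : (1 : ℝ) ≤ k := by exact_mod_cast hn.trans hnk
    gcongr
    linarith
  induction k, hnk using Nat.le_induction with
  | base =>
    have : (1 : ℝ) ≤ n := by exact_mod_cast hn
    simp only [Finset.Ico_self, Finset.sum_empty]
    exact div_nonneg (Real.rpow_nonneg (by linarith) _) hε.le
  | succ k hnk ih =>
    rw [Finset.sum_Ico_succ_top hnk, le_div_iff₀ hε]
    rw [le_div_iff₀ hε] at ih
    have := sub_one_rpow_le hε.le hε₁ (x := k) (by exact_mod_cast hn.trans hnk)
    push_cast
    rw [add_sub_cancel_right]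
    linarith

lemma sum_Ico_rpow_neg_one_add_le {η : ℝ} (hη : 0 < η) (hη₁ : η ≤ 1) {n k : ℕ} (hn : 1 ≤ n) :
    ∑ j ∈ Finset.Ico n k, (j : ℝ) ^ (-(1 + η)) ≤
      (n : ℝ) ^ (-(1 + η)) + (n : ℝ) ^ (-η) / η := by
  have hn0 : (0 : ℝ) < n := by exact_mod_cast hn
  rcases le_or_gt k n with hk | hk
  · rw [Finset.Ico_eq_empty (by omega), Finset.sum_empty]; positivity
  suffices h : ∑ j ∈ Finset.Ico n k, (j : ℝ) ^ (-(1 + η)) ≤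
      (n : ℝ) ^ (-(1 + η)) + ((n : ℝ) ^ (-η) - ((k : ℝ) - 1) ^ (-η)) / η by
    have : (1 : ℝ) ≤ k := by exact_mod_cast (by omega : 1 ≤ k)
    have := Real.rpow_nonneg (by linarith : (0 : ℝ) ≤ (k : ℝ) - 1) (-η)
    refine h.trans ?_
    gcongr
    linarith
  induction k, hk using Nat.le_induction with
  | base => simp
  | succ k hk ih =>
    rw [Finset.sum_Ico_succ_top (by omega)]
    have h1 := add_mul_rpow_le_sub_one_rpow_neg hη.le hη₁ (x := k)
      (by exact_mod_cast (by omega : 1 < k))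
    have h2 : (k : ℝ) ^ (-(1 + η)) ≤ (((k : ℝ) - 1) ^ (-η) - (k : ℝ) ^ (-η)) / η := by
      rw [le_div_iff₀ hη]; linarith
    push_cast
    rw [add_sub_cancel_right]
    have e : ((n : ℝ) ^ (-η) - (k : ℝ) ^ (-η)) / η =
      ((n : ℝ) ^ (-η) - ((k : ℝ) - 1) ^ (-η)) / η +
        (((k : ℝ) - 1) ^ (-η) - (k : ℝ) ^ (-η)) / η := by ring
    rw [e]
    linarith

lemma budget_le_of_growth {δ : ℝ} (hδ : 0 < δ) (hδ₁ : δ ≤ 1 / 2) {s : ℕ → ℝ}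
    (hs : ∀ k, 0 < s k) {n k : ℕ} (hn : 1 ≤ n) (hnk : n ≤ k)
    (hgrow : ∀ j, n ≤ j → j ≤ k →
      s j ^ (1 + δ) ≤ 8 * ((k : ℝ) / j) ^ (1 - δ ^ 2 / 2) * s k ^ (1 + δ)) :
    budget δ s n k ≤ 18 / δ ^ 2 * (k * s k ^ (1 + δ)) := by
  set f : ℝ := s k ^ (1 + δ) with hf
  have hf0 : 0 < f := Real.rpow_pos_of_pos (hs k) _
  have hn0 : (0 : ℝ) < n := by exact_mod_cast hn
  have hnk' : (n : ℝ) ≤ k := by exact_mod_cast hnk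
  have hk0 : (0 : ℝ) < k := hn0.trans_le hnk'
  set β := 1 - δ ^ 2 / 2 with hβ
  have hβ1 : β ≤ 1 := by rw [hβ]; nlinarith
  have h₁ : n * s n ^ (1 + δ) ≤ 8 * (k * f) := by
    have hr : ((k : ℝ) / n) ^ β ≤ (k : ℝ) / n := by
      simpa using Real.rpow_le_rpow_of_exponent_le ((one_le_div hn0).2 hnk') hβ1
    calc n * s n ^ (1 + δ) ≤ n * (8 * ((k : ℝ) / n) ^ β * f) := by
          gcongr; exact hgrow n le_rfl hnk
      _ ≤ n * (8 * ((k : ℝ) / n) * f) := by gcongr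
      _ = 8 * (k * f) := by field_simp
  have h₂ : ∑ j ∈ Finset.Ico n k, s j ^ (1 + δ) ≤ 16 / δ ^ 2 * (k * f) := by
    have hsum := sum_Ico_rpow_sub_one_le (ε := δ ^ 2 / 2) (by positivity) (by nlinarith) hn hnk
    calc ∑ j ∈ Finset.Ico n k, s j ^ (1 + δ)
        ≤ ∑ j ∈ Finset.Ico n k, 8 * f * (k : ℝ) ^ β * (j : ℝ) ^ (δ ^ 2 / 2 - 1) := by
          refine Finset.sum_le_sum fun j hj => ?_
          obtain ⟨hj1, hj2⟩ := Finset.mem_Ico.1 hj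
          refine (hgrow j hj1 hj2.le).trans (le_of_eq ?_)
          rw [Real.div_rpow hk0.le (by positivity), show δ ^ 2 / 2 - 1 = -β by rw [hβ]; ring,
            Real.rpow_neg (by positivity)]
          ring
      _ = 8 * f * (k : ℝ) ^ β * ∑ j ∈ Finset.Ico n k, (j : ℝ) ^ (δ ^ 2 / 2 - 1) := by
          rw [Finset.mul_sum]
      _ ≤ 8 * f * (k : ℝ) ^ β * ((k : ℝ) ^ (δ ^ 2 / 2) / (δ ^ 2 / 2)) := by gcongr
      _ = 8 * f * ((k : ℝ) ^ β * (k : ℝ) ^ (δ ^ 2 / 2)) * (2 / δ ^ 2) := by field_simp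
      _ = 16 / δ ^ 2 * (k * f) := by
          rw [← Real.rpow_add hk0, hβ, sub_add_cancel, Real.rpow_one]; ring
  have h₃ : 8 ≤ 2 / δ ^ 2 := by
    rw [le_div_iff₀ (by positivity)]; nlinarith
  have hkf : 0 < k * f := by positivity
  calc budget δ s n k ≤ 8 * (k * f) + 16 / δ ^ 2 * (k * f) := add_le_add h₁ h₂
    _ ≤ 2 / δ ^ 2 * (k * f) + 16 / δ ^ 2 * (k * f) := by gcongr
    _ = _ := by ring

lemma const_lt_exp_div_sq {δ : ℝ} (hδ : 0 < δ) (hδ₁ : δ ≤ 1 / 2) :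
    10 ^ 6 / δ ^ 2 < Real.exp (5 / δ ^ 2) := by
  have hδ2 : δ ^ 2 ≤ 1 / 4 := by nlinarith
  set y := 5 / δ ^ 2 with hy
  have hy20 : 20 ≤ y := by
    rw [hy, le_div_iff₀ (by positivity)]; nlinarith
  have e : 10 ^ 6 / δ ^ 2 = 2 * 10 ^ 5 * y := by rw [hy]; ring
  have h₁ : (2.7 : ℝ) ^ 20 ≤ Real.exp 20 := by
    rw [show (20 : ℝ) = (20 : ℕ) * 1 by norm_num, Real.exp_nat_mul]
    gcongr
    linarith [Real.exp_one_gt_d9]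
  have h₂ : y - 19 ≤ Real.exp (y - 20) := by linarith [Real.add_one_le_exp (y - 20)]
  have h₃ : Real.exp y = Real.exp 20 * Real.exp (y - 20) := by rw [← Real.exp_add]; ring_nf
  rw [e, h₃]
  have h₄ : (2.7 : ℝ) ^ 20 * (y - 19) ≤ Real.exp 20 * Real.exp (y - 20) := by
    gcongr
    linarith
  have h₅ : (5 : ℝ) * 10 ^ 6 ≤ 2.7 ^ 20 := by norm_num
  nlinarith

lemma rpow_le_exp_add_mul {δ : ℝ} (hδ : 0 < δ) (hδ₁ : δ ≤ 1) {y : ℝ} (hy : 0 ≤ y) :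
    y ^ δ ≤ 1 / Real.exp (5 / δ ^ 3) + Real.exp (5 / δ ^ 4 - 5 / δ ^ 3) * y := by
  rcases le_or_gt y (Real.exp (-(5 / δ ^ 4))) with h | h
  · have h₁ := Real.rpow_le_rpow hy h hδ.le
    rw [← Real.exp_mul] at h₁
    have e : -(5 / δ ^ 4) * δ = -(5 / δ ^ 3) := by field_simp
    rw [e, Real.exp_neg, ← one_div] at h₁
    have : 0 ≤ Real.exp (5 / δ ^ 4 - 5 / δ ^ 3) * y := by positivity
    linarith
  · have hy0 : 0 < y := (Real.exp_pos _).trans h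
    have h₁ := Real.rpow_le_rpow_of_nonpos (Real.exp_pos _) h.le (sub_nonpos.2 hδ₁)
    rw [← Real.exp_mul] at h₁
    have e : -(5 / δ ^ 4) * (δ - 1) = 5 / δ ^ 4 - 5 / δ ^ 3 := by field_simp; ring
    rw [e] at h₁
    have h₂ : y ^ δ = y ^ (δ - 1) * y := by
      rw [Real.rpow_sub_one hy0.ne']; field_simp
    rw [h₂]
    have : 0 < 1 / Real.exp (5 / δ ^ 3) := by positivity
    nlinarith

/-- A polynomial form of the largeness of `n₀` in terms of `δ`. -/
lemma exists_sixteenth_root {δ : ℝ} (hδ : 0 < δ) (hδ₁ : δ ≤ 1 / 2) {n : ℝ}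
    (hn : 2 * Real.exp (16 / δ ^ 4) ≤ n) :
    ∃ x : ℝ, 2 ^ 22 ≤ x ∧ x ^ 16 = n ∧ Real.exp (1 / δ ^ 4) ≤ x ∧ Real.log n ≤ 16 * x := by
  have he := Real.exp_pos (16 / δ ^ 4)
  have hn0 : 0 < n := by linarith
  have hx0 : 0 < n ^ (1 / 16 : ℝ) := Real.rpow_pos_of_pos hn0 _
  have hx16 : (n ^ (1 / 16 : ℝ)) ^ 16 = n := by
    rw [← Real.rpow_natCast, ← Real.rpow_mul hn0.le]; norm_num
  have hexp : Real.exp (1 / δ ^ 4) ≤ n ^ (1 / 16 : ℝ) := by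
    have h : Real.exp (16 / δ ^ 4) ≤ n := by linarith
    have := Real.rpow_le_rpow he.le h (by norm_num : (0 : ℝ) ≤ 1 / 16)
    rwa [← Real.exp_mul, show 16 / δ ^ 4 * (1 / 16) = 1 / δ ^ 4 by ring] at this
  refine ⟨_, le_trans ?_ hexp, hx16, hexp, ?_⟩
  · have h16 : (16 : ℝ) ≤ 1 / δ ^ 4 := by
      rw [le_div_iff₀ (by positivity)]
      have : δ ^ 4 ≤ (1 / 2) ^ 4 := by gcongr
      linarith
    have h₁ : (2.7 : ℝ) ^ 16 ≤ Real.exp 16 := by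
      rw [show (16 : ℝ) = (16 : ℕ) * 1 by norm_num, Real.exp_nat_mul]
      gcongr
      linarith [Real.exp_one_gt_d9]
    have h₂ := Real.exp_le_exp.2 h16
    have h₃ : (2 : ℝ) ^ 22 ≤ 2.7 ^ 16 := by norm_num
    linarith
  · have := Real.log_le_sub_one_of_pos hx0
    rw [Real.log_rpow hn0] at this
    linarith

/-- Side lengths of slow, almost linearly controlled decay have the property `SlowDecay`. -/
theorem slowDecay_of_growth {δ : ℝ} (hδ : 0 < δ) (hδ₁ : δ ≤ 1 / 2) {s : ℕ → ℝ}
    (hs : ∀ k, 0 < s k) (hanti : Antitone s) {n : ℕ}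
    (hn : 2 * Real.exp (16 / δ ^ 4) ≤ (n : ℝ))
    (hgrow : ∀ j k, n ≤ j → j ≤ k → s j ≤ 8 * ((k : ℝ) / j) * s k)
    (hgrow' : ∀ j k, n ≤ j → j ≤ k →
      s j ^ (1 + δ) ≤ 8 * ((k : ℝ) / j) ^ (1 - δ ^ 2 / 2) * s k ^ (1 + δ))
    {a : ℝ} (ha : 0 < a) (hlow : ∀ k, ∑ j ∈ Finset.Ico n k, s j ^ 2 ≤ a ^ 2)
    (hup : a ^ 2 ≤ 64 * (n * Real.log n) * s n ^ 2) :
    SlowDecay δ 16 (Real.exp (5 / δ ^ 3)) (Real.exp (5 / δ ^ 4 - 5 / δ ^ 3)) a s n ∧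
    weightedPerimeter δ (a, a) + n * s n ^ (1 + δ) / Real.exp (5 / δ ^ 3) ≤
      7 * 16 / Real.exp (5 / δ ^ 3) * (n * s n ^ (1 + δ)) := by
  obtain ⟨x, hx, hx16, hxexp, hxlog⟩ := exists_sixteenth_root hδ hδ₁ hn
  have hx0 : 0 < x := by linarith [show (0 : ℝ) < 2 ^ 22 by norm_num]
  have hn0 : (0 : ℝ) < n := by rw [← hx16]; positivity
  have hn1 : 1 ≤ n := by exact_mod_cast hn0
  have hsn := hs n
  set r := a / s n with hr
  have hr0 : 0 < r := by positivity
  have har : a = r * s n := by rw [hr]; field_simp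
  have hr2 : r ^ 2 ≤ 2 ^ 10 * x ^ 17 := by
    rw [hr, div_pow, div_le_iff₀ (by positivity)]
    refine hup.trans ?_
    have : n * Real.log n ≤ x ^ 16 * (16 * x) := by rw [hx16]; gcongr
    calc 64 * (n * Real.log n) * s n ^ 2 ≤ 64 * (x ^ 16 * (16 * x)) * s n ^ 2 := by gcongr
      _ = _ := by ring
  have hr1 : 1 ≤ r := by
    rw [hr, le_div_iff₀ hsn, one_mul]
    have := hlow (n + 1)
    simp only [Nat.Ico_succ_singleton, Finset.sum_singleton] at this
    exact le_of_sq_le_sq this ha.le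
  set M := Real.exp (5 / δ ^ 3) with hM
  have hM0 : 0 < M := Real.exp_pos _
  have hδ34 : 2 * (5 / δ ^ 3) ≤ 5 / δ ^ 4 := by
    rw [← mul_div_assoc, div_le_div_iff₀ (by positivity) (by positivity)]
    have : 0 < δ ^ 3 := by positivity
    nlinarith
  have hx5 : Real.exp (5 / δ ^ 4) ≤ x ^ 5 := by
    calc Real.exp (5 / δ ^ 4) = Real.exp (1 / δ ^ 4) ^ 5 := by
          rw [← Real.exp_nat_mul]; congr 1; push_cast; ring
      _ ≤ _ := by gcongr
  have hM2 : M ^ 2 ≤ x ^ 5 := by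
    refine le_trans ?_ hx5
    rw [hM, ← Real.exp_nat_mul]
    exact Real.exp_le_exp.2 (by exact_mod_cast hδ34)
  have hδ3 : 0 < 5 / δ ^ 3 := by positivity
  have hΛM : Real.exp (5 / δ ^ 4 - 5 / δ ^ 3) * M = Real.exp (5 / δ ^ 4) := by
    rw [hM, ← Real.exp_add]; ring_nf
  have hkpos : ∀ k, n ≤ k → (0 : ℝ) < k := fun k hk => by exact_mod_cast hn1.trans hk
  refine ⟨⟨hδ, by linarith, ?_, ?_, by norm_num, ha, fun y hy _ =>
    rpow_le_exp_add_mul hδ (by linarith) hy, hs, hanti, ?_, ?_, ?_⟩, ?_⟩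
  · have : 1 ≤ 5 / δ ^ 3 := by
      rw [le_div_iff₀ (by positivity)]
      have : δ ^ 3 ≤ (1 / 2) ^ 3 := by gcongr
      linarith
    linarith [Real.add_one_le_exp (5 / δ ^ 3)]
  · exact Real.one_le_exp (by linarith)
  · intro k j hk hkj hj
    refine (hgrow' k j hk hkj).trans ?_
    have hk0 := hkpos k hk
    have h₁ : 1 ≤ (j : ℝ) / k := by rw [one_le_div hk0]; exact_mod_cast hkj
    have h₂ : (j : ℝ) / k ≤ 2 := by rw [div_le_iff₀ hk0]; exact_mod_cast hj
    have h₃ : ((j : ℝ) / k) ^ (1 - δ ^ 2 / 2) ≤ 2 := by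
      refine le_trans ?_ h₂
      simpa using Real.rpow_le_rpow_of_exponent_le h₁
        (show 1 - δ ^ 2 / 2 ≤ 1 by linarith [sq_nonneg δ])
    have := Real.rpow_pos_of_pos (hs j) (1 + δ)
    gcongr
    linarith
  · intro k hk
    have hk0 := hkpos k hk
    have hsk := hs k
    have hb := budget_le_of_growth hδ hδ₁ hs hn1 hk fun j hj hjk => hgrow' j k hj hjk
    have h₁ : k * (s k / 16) ^ 2 ≤ a ^ 2 - ∑ j ∈ Finset.Ico n k, s j ^ 2 := by
      have h₂ := hlow (2 * k)
      rw [← Finset.sum_Ico_consecutive _ hk (show k ≤ 2 * k by omega)] at h₂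
      have h₃ : s k / 16 ≤ s (2 * k) := by
        have := hgrow k (2 * k) hk (by omega)
        push_cast at this
        rw [mul_div_assoc, div_self hk0.ne'] at this
        linarith
      have h₄ := Finset.card_nsmul_le_sum (Finset.Ico k (2 * k)) (fun j => s j ^ 2)
        ((s k / 16) ^ 2) fun j hj => by
          have : s (2 * k) ≤ s j := hanti (Finset.mem_Ico.1 hj).2.le
          have := h₃.trans this
          gcongr
      rw [Nat.card_Ico, show 2 * k - k = k by omega, nsmul_eq_mul] at h₄
      linarith
    refine lt_of_lt_of_le ?_ h₁
    have hMδ : M ^ δ = Real.exp (5 / δ ^ 2) := by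
      rw [hM, ← Real.exp_mul]; congr 1; field_simp
    have hMδ' := const_lt_exp_div_sq hδ hδ₁
    rw [← hMδ] at hMδ'
    have hMδ0 : 0 < M ^ δ := Real.rpow_pos_of_pos hM0 _
    have e₁ : (M * s k) ^ (1 - δ) * s k ^ (1 + δ) = M / M ^ δ * s k ^ 2 := by
      rw [Real.mul_rpow hM0.le hsk.le, mul_assoc, ← Real.rpow_add hsk, Real.rpow_sub hM0,
        Real.rpow_one]
      norm_num
    have h₅ : 2016 / δ ^ 2 / M ^ δ < 1 / 256 := by
      rw [div_lt_div_iff₀ hMδ0 (by norm_num), one_mul]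
      refine lt_of_le_of_lt ?_ hMδ'
      rw [div_mul_eq_mul_div]
      gcongr
      norm_num
    have := Real.rpow_nonneg (by positivity : 0 ≤ M * s k) (1 - δ)
    calc (M * s k) ^ (1 - δ) * (7 * 16 / M * budget δ s n k)
        ≤ (M * s k) ^ (1 - δ) * (7 * 16 / M * (18 / δ ^ 2 * (k * s k ^ (1 + δ)))) := by gcongr
      _ = 2016 / δ ^ 2 / M * k * ((M * s k) ^ (1 - δ) * s k ^ (1 + δ)) := by ring
      _ = 2016 / δ ^ 2 / M ^ δ * (k * s k ^ 2) := by rw [e₁]; field_simp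
      _ < 1 / 256 * (k * s k ^ 2) := by gcongr
      _ = k * (s k / 16) ^ 2 := by ring
  · intro k hk
    have hk0 := hkpos k hk
    have h₁ : n * s n / 16 ≤ k * s (2 * k) := by
      have := hgrow n (2 * k) le_rfl (by omega)
      push_cast at this
      have h2 : n * s n ≤ n * (8 * (2 * k / n) * s (2 * k)) := by gcongr
      have e : n * (8 * (2 * k / n) * s (2 * k)) = 16 * (k * s (2 * k)) := by field_simp; ring
      linarith
    refine le_trans ?_ h₁
    have h₂ : (32 * x ^ 5 * r) ≤ x ^ 16 := by
      refine le_of_sq_le_sq ?_ (by positivity)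
      calc (32 * x ^ 5 * r) ^ 2 = 2 ^ 10 * x ^ 10 * r ^ 2 := by ring
        _ ≤ 2 ^ 10 * x ^ 10 * (2 ^ 10 * x ^ 17) := by gcongr
        _ = 2 ^ 20 * x ^ 27 * 1 := by ring
        _ ≤ x * x ^ 27 * x ^ 4 := by
          have : (1 : ℝ) ≤ x ^ 4 := one_le_pow₀ (by linarith)
          gcongr
          linarith
        _ = (x ^ 16) ^ 2 := by ring
    calc 2 * Real.exp (5 / δ ^ 4 - 5 / δ ^ 3) * M * a
        = 2 * Real.exp (5 / δ ^ 4) * (r * s n) := by rw [← hΛM, ← har]; ring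
      _ ≤ 2 * x ^ 5 * (r * s n) := by gcongr
      _ = (32 * x ^ 5 * r) * s n / 16 := by ring
      _ ≤ x ^ 16 * s n / 16 := by gcongr
      _ = _ := by rw [hx16]
  · have h₁ : weightedPerimeter δ (a, a) = 2 * r ^ (1 + δ) * s n ^ (1 + δ) := by
      rw [weightedPerimeter, mul_comm (a ^ δ), mul_rpow_self ha, har,
        Real.mul_rpow hr0.le hsn.le]
      ring
    have h₂ : r ^ (1 + δ) ≤ r ^ (3 / 2 : ℝ) :=
      Real.rpow_le_rpow_of_exponent_le hr1 (by linarith)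
    have h₃ : M * r ^ (3 / 2 : ℝ) ≤ n := by
      have hr4 : (r ^ (3 / 2 : ℝ)) ^ 4 = r ^ 6 := by
        rw [← Real.rpow_natCast, ← Real.rpow_mul hr0.le, ← Real.rpow_natCast]; norm_num
      rw [← hx16]
      refine le_of_pow_le_pow_left₀ (n := 4) (by norm_num) (by positivity) ?_
      calc (M * r ^ (3 / 2 : ℝ)) ^ 4 = (M ^ 2) ^ 2 * (r ^ 2) ^ 3 := by rw [mul_pow, hr4]; ring
        _ ≤ (x ^ 5) ^ 2 * (2 ^ 10 * x ^ 17) ^ 3 := by gcongr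
        _ = 2 ^ 15 * (2 ^ 15 * x ^ 61) * 1 := by ring
        _ ≤ x * (x * x ^ 61) * x := by gcongr <;> linarith
        _ = (x ^ 16) ^ 4 := by ring
    have hf0 : 0 < s n ^ (1 + δ) := Real.rpow_pos_of_pos hsn _
    have h₄ : M * weightedPerimeter δ (a, a) ≤ 2 * (n * s n ^ (1 + δ)) := by
      rw [h₁]
      calc M * (2 * r ^ (1 + δ) * s n ^ (1 + δ)) = 2 * ((M * r ^ (1 + δ)) * s n ^ (1 + δ)) := by
            ring
        _ ≤ 2 * ((M * r ^ (3 / 2 : ℝ)) * s n ^ (1 + δ)) := by gcongr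
        _ ≤ _ := by gcongr
    have h₅ : weightedPerimeter δ (a, a) ≤ 2 * (n * s n ^ (1 + δ)) / M := by
      rw [le_div_iff₀ hM0]; linarith
    have h₆ : 0 < n * s n ^ (1 + δ) / M := by positivity
    have e : 7 * 16 / M * (n * s n ^ (1 + δ)) = 112 * (n * s n ^ (1 + δ) / M) := by ring
    have e' : 2 * (n * s n ^ (1 + δ)) / M = 2 * (n * s n ^ (1 + δ) / M) := by ring
    rw [e]
    linarith

lemma nthPrime_prime (n : ℕ) : (nthPrime n).Prime := Nat.prime_nth_prime _

lemma nthPrime_monotone : Monotone nthPrime := fun _ _ h =>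
  Nat.nth_monotone Nat.infinite_setOfPred_prime (Nat.sub_le_sub_right h 1)

lemma lt_nthPrime (n : ℕ) : n < nthPrime n := by
  have := Nat.add_two_le_nth_prime (n - 1)
  unfold nthPrime
  omega

lemma nthPrime_pos (n : ℕ) : (0 : ℝ) < nthPrime n := by
  exact_mod_cast (nthPrime_prime n).pos

lemma primeCounting_nthPrime {n : ℕ} (hn : 1 ≤ n) : Nat.primeCounting (nthPrime n) = n := by
  have h : Nat.count Nat.Prime (nthPrime n) = n - 1 := Nat.primeCounting'_nth_eq (n - 1)
  rw [Nat.primeCounting, Nat.primeCounting', Nat.count_succ, h, if_pos (nthPrime_prime n)]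
  omega

lemma mul_log_nthPrime_le {n : ℕ} (hn : 1 ≤ n) :
    n * Real.log (nthPrime n) ≤ 4 * nthPrime n := by
  have hp : (1 : ℝ) < nthPrime n := by exact_mod_cast (nthPrime_prime n).one_lt
  have h := Chebyshev.pi_le_log4_mul_div hp
  rw [Nat.floor_natCast, primeCounting_nthPrime hn] at h
  set p : ℝ := (nthPrime n : ℝ)
  have hp0 : 0 < p := by linarith
  have hlog : 0 < Real.log p := Real.log_pos hp
  have hsq : 0 < √p := Real.sqrt_pos.2 hp0
  have hss : √p * √p = p := Real.mul_self_sqrt hp0.le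
  have h₁ : Real.log p ≤ √p := by
    have := Real.log_le_sub_one_of_pos (show 0 < √p / 2 by positivity)
    rw [Real.log_div hsq.ne' (by norm_num), Real.log_sqrt hp0.le] at this
    linarith [Real.log_two_lt_d9]
  have h₂ : Real.log 4 = 2 * Real.log 2 := by
    rw [show (4 : ℝ) = 2 ^ 2 by norm_num, Real.log_pow]; norm_num
  rw [Real.log_sqrt hp0.le, h₂] at h
  calc n * Real.log p ≤ (2 * Real.log 2 * p / (Real.log p / 2) + √p) * Real.log p := by gcongr
    _ = 4 * Real.log 2 * p + √p * Real.log p := by field_simp; ring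
    _ ≤ 4 * 0.7 * p + √p * √p := by
      gcongr
      linarith [Real.log_two_lt_d9]
    _ = 3.8 * p := by rw [hss]; ring
    _ ≤ 4 * p := by gcongr; norm_num

lemma nthPrime_le_mul_log {n : ℕ} (hn : 1000 ≤ n) :
    (nthPrime n : ℝ) ≤ 2 * n * Real.log (nthPrime n) := by
  have h := (Chebyshev.psi_ge (nthPrime n)).trans
    (Chebyshev.psi_le_primeCounting_mul_log (nthPrime n))
  rw [primeCounting_nthPrime (by omega)] at h
  have hp : (1000 : ℝ) ≤ nthPrime n := by exact_mod_cast hn.trans (lt_nthPrime n).le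
  set p : ℝ := (nthPrime n : ℝ)
  have h₁ : Real.log (p + 1) ≤ (p + 1) / 16 + 2 := by
    have := Real.log_le_sub_one_of_pos (show 0 < (p + 1) / 2 ^ 4 by positivity)
    rw [Real.log_div (by linarith) (by norm_num), Real.log_pow] at this
    push_cast at this
    linarith [Real.log_two_lt_d9]
  nlinarith [Real.log_two_gt_d9]

lemma nthPrime_ratio_rpow_le {j k : ℕ} (hj : 1000 ≤ j) (hjk : j ≤ k) {ε : ℝ} (hε : 0 < ε)
    (hlog : 1 / ε ≤ Real.log (nthPrime j)) :
    ((nthPrime k : ℝ) / nthPrime j) ^ (1 - ε) ≤ 8 * ((k : ℝ) / j) := by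
  have hp := nthPrime_pos j
  have hpq : (nthPrime j : ℝ) ≤ nthPrime k := by exact_mod_cast nthPrime_monotone hjk
  have h₁ := mul_log_nthPrime_le (show 1 ≤ j by omega)
  have h₂ := nthPrime_le_mul_log (hj.trans hjk)
  have hj0 : (0 : ℝ) < j := by exact_mod_cast (by omega : 0 < j)
  set p : ℝ := (nthPrime j : ℝ)
  set q : ℝ := (nthPrime k : ℝ)
  set L := Real.log p
  have hL : 0 < L := lt_of_lt_of_le (by positivity) hlog
  have hR : 1 ≤ q / p := (one_le_div hp).2 hpq
  have hR0 : 0 < q / p := by linarith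
  have h₃ : Real.log q ≤ L * (q / p) ^ ε := by
    have h : Real.log q = L + Real.log (q / p) := by
      rw [Real.log_div (by linarith) hp.ne']; ring
    have h' : Real.log (q / p) ≤ L * (Real.log (q / p) * ε) := by
      have : 1 ≤ L * ε := by rwa [div_le_iff₀ hε] at hlog
      nlinarith [Real.log_nonneg hR]
    rw [h, Real.rpow_def_of_pos hR0]
    nlinarith [Real.add_one_le_exp (Real.log (q / p) * ε)]
  rw [Real.rpow_sub hR0, Real.rpow_one, div_le_iff₀ (Real.rpow_pos_of_pos hR0 _),
    div_le_iff₀ hp]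
  calc q ≤ 2 * k * (L * (q / p) ^ ε) := h₂.trans (by gcongr)
    _ = 2 * (k / j) * (q / p) ^ ε * (j * L) := by field_simp
    _ ≤ 2 * (k / j) * (q / p) ^ ε * (4 * p) := by gcongr
    _ = _ := by ring

lemma nthPrime_ratio_le {j k : ℕ} (hj : 1000 ≤ j) (hjk : j ≤ k) :
    (nthPrime j : ℝ) / nthPrime k ≤ 8 * ((j : ℝ) / k) := by
  have hp := nthPrime_pos j
  have hpq : (nthPrime j : ℝ) ≤ nthPrime k := by exact_mod_cast nthPrime_monotone hjk
  have h₁ := mul_log_nthPrime_le (show 1 ≤ k by omega)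
  have h₂ := nthPrime_le_mul_log hj
  have hk0 : (0 : ℝ) < k := by exact_mod_cast (by omega : 0 < k)
  rw [div_le_iff₀ (hp.trans_le hpq)]
  calc (nthPrime j : ℝ) ≤ 2 * j * Real.log (nthPrime j) := h₂
    _ ≤ 2 * j * Real.log (nthPrime k) := by gcongr
    _ = 2 * (j / k) * (k * Real.log (nthPrime k)) := by field_simp
    _ ≤ 2 * (j / k) * (4 * nthPrime k) := by gcongr
    _ = _ := by ring

lemma nthPrime_rpow_neg_eq (t : ℝ) (j k : ℕ) :
    (nthPrime j : ℝ) ^ (-t) = ((nthPrime k : ℝ) / nthPrime j) ^ t * (nthPrime k : ℝ) ^ (-t) := by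
  have hk := Real.rpow_pos_of_pos (nthPrime_pos k) t
  rw [Real.div_rpow (nthPrime_pos k).le (nthPrime_pos j).le, Real.rpow_neg (nthPrime_pos j).le,
    Real.rpow_neg (nthPrime_pos k).le]
  field_simp

lemma nthPrime_rpow_neg_sq (t : ℝ) (n : ℕ) :
    ((nthPrime n : ℝ) ^ (-t)) ^ 2 = (nthPrime n : ℝ) ^ (-(2 * t)) := by
  rw [← Real.rpow_natCast, ← Real.rpow_mul (nthPrime_pos n).le]
  congr 1
  push_cast
  ring

lemma nthPrime_rpow_neg_antitone {t : ℝ} (ht : 0 ≤ t) :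
    Antitone fun n => (nthPrime n : ℝ) ^ (-t) := fun _ _ h =>
  Real.rpow_le_rpow_of_nonpos (nthPrime_pos _) (by exact_mod_cast nthPrime_monotone h)
    (neg_nonpos.2 ht)

lemma summable_nthPrime_rpow_neg {t : ℝ} (ht : 1 < t) :
    Summable fun n => (nthPrime n : ℝ) ^ (-t) := by
  refine (summable_nat_add_iff 1).1 (Summable.of_nonneg_of_le
    (fun n => Real.rpow_nonneg (nthPrime_pos _).le _) (fun n => ?_)
    ((summable_nat_add_iff 1).2 (Real.summable_nat_rpow.2 (neg_lt_neg ht))))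
  exact Real.rpow_le_rpow_of_nonpos (by positivity) (by exact_mod_cast (lt_nthPrime (n + 1)).le)
    (by linarith)

lemma nthPrime_rpow_neg_le_mul {δ ε : ℝ} (hε : 0 < ε) (hεδ : ε ≤ δ) {j k : ℕ}
    (hj : 1000 ≤ j) (hjk : j ≤ k) (hlog : 1 / ε ≤ Real.log (nthPrime j)) :
    (nthPrime j : ℝ) ^ (-(1 - δ)) ≤ 8 * ((k : ℝ) / j) * (nthPrime k : ℝ) ^ (-(1 - δ)) := by
  rw [nthPrime_rpow_neg_eq _ j k]
  have hR : 1 ≤ (nthPrime k : ℝ) / nthPrime j :=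
    (one_le_div (nthPrime_pos j)).2 (by exact_mod_cast nthPrime_monotone hjk)
  have := Real.rpow_nonneg (nthPrime_pos k).le (-(1 - δ))
  gcongr
  exact (Real.rpow_le_rpow_of_exponent_le hR (by linarith)).trans
    (nthPrime_ratio_rpow_le hj hjk hε hlog)

lemma nthPrime_rpow_neg_rpow_le_mul {δ ε : ℝ} (hε : 0 < ε) (hεδ : ε ≤ δ ^ 2 / 2) (hδ₁ : δ ^ 2 ≤ 1)
    {j k : ℕ} (hj : 1000 ≤ j) (hjk : j ≤ k) (hlog : 1 / ε ≤ Real.log (nthPrime j)) :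
    ((nthPrime j : ℝ) ^ (-(1 - δ))) ^ (1 + δ) ≤
      8 * ((k : ℝ) / j) ^ (1 - δ ^ 2 / 2) * ((nthPrime k : ℝ) ^ (-(1 - δ))) ^ (1 + δ) := by
  rw [← Real.rpow_mul (nthPrime_pos j).le, ← Real.rpow_mul (nthPrime_pos k).le,
    show -(1 - δ) * (1 + δ) = -(1 - δ ^ 2) by ring, nthPrime_rpow_neg_eq _ j k]
  have hR : 1 ≤ (nthPrime k : ℝ) / nthPrime j :=
    (one_le_div (nthPrime_pos j)).2 (by exact_mod_cast nthPrime_monotone hjk)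
  have := Real.rpow_nonneg (nthPrime_pos k).le (-(1 - δ ^ 2))
  gcongr
  have h8 : (8 : ℝ) ^ (1 - δ ^ 2 / 2) ≤ 8 := by
    simpa using Real.rpow_le_rpow_of_exponent_le (by norm_num : (1 : ℝ) ≤ 8)
      (show 1 - δ ^ 2 / 2 ≤ 1 by linarith [sq_nonneg δ])
  calc ((nthPrime k : ℝ) / nthPrime j) ^ (1 - δ ^ 2)
      ≤ ((nthPrime k : ℝ) / nthPrime j) ^ ((1 - ε) * (1 - δ ^ 2 / 2)) :=
        Real.rpow_le_rpow_of_exponent_le hR (by nlinarith [sq_nonneg δ])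
    _ = (((nthPrime k : ℝ) / nthPrime j) ^ (1 - ε)) ^ (1 - δ ^ 2 / 2) :=
        Real.rpow_mul (by linarith) _ _
    _ ≤ (8 * ((k : ℝ) / j)) ^ (1 - δ ^ 2 / 2) :=
        Real.rpow_le_rpow (Real.rpow_nonneg (by linarith) _)
          (nthPrime_ratio_rpow_le hj hjk hε hlog) (by linarith)
    _ = (8 : ℝ) ^ (1 - δ ^ 2 / 2) * ((k : ℝ) / j) ^ (1 - δ ^ 2 / 2) :=
        Real.mul_rpow (by norm_num) (by positivity)
    _ ≤ _ := by gcongr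

lemma sum_Ico_nthPrime_rpow_neg_le {t : ℝ} (ht₁ : 1 / 2 < t) (ht₂ : t < 1) {n : ℕ}
    (hn : 1000 ≤ n) (hlog : 2 / (2 * t - 1) ≤ Real.log n) (k : ℕ) :
    ∑ j ∈ Finset.Ico n k, (nthPrime j : ℝ) ^ (-(2 * t)) ≤
      64 * (n * Real.log n) * (nthPrime n : ℝ) ^ (-(2 * t)) := by
  set η := 2 * t - 1 with hη
  have hη0 : 0 < η := by linarith
  have hη1 : η ≤ 1 := by linarith
  have hn0 : (0 : ℝ) < n := by exact_mod_cast (by omega : 0 < n)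
  have hn1 : (1 : ℝ) ≤ n := by exact_mod_cast (by omega : 1 ≤ n)
  have hP : 0 ≤ (nthPrime n : ℝ) ^ (-(2 * t)) := Real.rpow_nonneg (nthPrime_pos n).le _
  have h64 : (8 : ℝ) ^ (2 * t) ≤ 64 := by
    have := Real.rpow_le_rpow_of_exponent_le (by norm_num : (1 : ℝ) ≤ 8)
      (show 2 * t ≤ (2 : ℕ) by push_cast; linarith)
    rw [Real.rpow_natCast] at this
    linarith
  have hnpos : 0 < (n : ℝ) ^ (1 + η) := Real.rpow_pos_of_pos hn0 _
  have hterm : ∀ j ∈ Finset.Ico n k, (nthPrime j : ℝ) ^ (-(2 * t)) ≤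
      64 * (nthPrime n : ℝ) ^ (-(2 * t)) * (n : ℝ) ^ (1 + η) * (j : ℝ) ^ (-(1 + η)) := by
    intro j hj
    have hnj := (Finset.mem_Ico.1 hj).1
    have hj0 : (0 : ℝ) ≤ j := by positivity
    have h : ((nthPrime n : ℝ) / nthPrime j) ^ (2 * t) ≤ 64 * ((n : ℝ) / j) ^ (2 * t) := by
      calc ((nthPrime n : ℝ) / nthPrime j) ^ (2 * t) ≤ (8 * ((n : ℝ) / j)) ^ (2 * t) :=
            Real.rpow_le_rpow (by positivity) (nthPrime_ratio_le hn hnj) (by linarith)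
        _ = (8 : ℝ) ^ (2 * t) * ((n : ℝ) / j) ^ (2 * t) :=
            Real.mul_rpow (by norm_num) (by positivity)
        _ ≤ _ := by gcongr
    rw [nthPrime_rpow_neg_eq _ j n]
    calc _ ≤ 64 * ((n : ℝ) / j) ^ (2 * t) * (nthPrime n : ℝ) ^ (-(2 * t)) := by gcongr
      _ = _ := by
        rw [Real.div_rpow hn0.le hj0, Real.rpow_neg hj0, show 1 + η = 2 * t by rw [hη]; ring]
        ring
  refine (Finset.sum_le_sum hterm).trans ?_
  rw [← Finset.mul_sum]
  have hsum := sum_Ico_rpow_neg_one_add_le (k := k) hη0 hη1 (show 1 ≤ n by omega)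
  have h₁ : (n : ℝ) ^ (1 + η) * ((n : ℝ) ^ (-(1 + η)) + (n : ℝ) ^ (-η) / η) = 1 + n / η := by
    rw [mul_add, ← Real.rpow_add hn0, add_neg_cancel, Real.rpow_zero, ← mul_div_assoc,
      ← Real.rpow_add hn0, add_neg_cancel_right, Real.rpow_one]
  have h₂ : 1 + n / η ≤ n * Real.log n := by
    have h : 1 ≤ n / η := by rw [le_div_iff₀ hη0]; linarith
    calc 1 + n / η ≤ n / η + n / η := by gcongr
      _ = n * (2 / η) := by ring
      _ ≤ _ := by gcongr
  calc 64 * (nthPrime n : ℝ) ^ (-(2 * t)) * (n : ℝ) ^ (1 + η) *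
        ∑ j ∈ Finset.Ico n k, (j : ℝ) ^ (-(1 + η))
      ≤ 64 * (nthPrime n : ℝ) ^ (-(2 * t)) * (n : ℝ) ^ (1 + η) *
        ((n : ℝ) ^ (-(1 + η)) + (n : ℝ) ^ (-η) / η) := by gcongr
    _ = 64 * (nthPrime n : ℝ) ^ (-(2 * t)) * (1 + n / η) := by rw [mul_assoc, h₁]
    _ ≤ 64 * (nthPrime n : ℝ) ^ (-(2 * t)) * (n * Real.log n) := by gcongr
    _ = _ := by ring

lemma sum_Ico_le_tsum_subtype {f : ℕ → ℝ} (hf : ∀ n, 0 ≤ f n) (hs : Summable f) (n k : ℕ) :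
    ∑ j ∈ Finset.Ico n k, f j ≤ ∑' m : {m // n ≤ m}, f m := by
  have hs' : Summable fun m : {m // n ≤ m} => f m := hs.subtype _
  refine le_of_eq_of_le ?_ (hs'.sum_le_tsum ((Finset.Ico n k).subtype (n ≤ ·)) fun i _ => hf i)
  rw [Finset.sum_subtype_of_mem f fun j hj => (Finset.mem_Ico.1 hj).1]

lemma tsum_subtype_le_of_sum_Ico_le {f : ℕ → ℝ} (hf : ∀ n, 0 ≤ f n) {n : ℕ} {B : ℝ}
    (h : ∀ k, ∑ j ∈ Finset.Ico n k, f j ≤ B) : ∑' m : {m // n ≤ m}, f m ≤ B := by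
  refine Real.tsum_le_of_sum_le (fun i => hf i) fun u => ?_
  have e : ∑ m ∈ u, f m = ∑ m ∈ u.map (Function.Embedding.subtype _), f m := by
    rw [Finset.sum_map]; rfl
  rw [e]
  refine (Finset.sum_le_sum_of_subset_of_nonneg (fun j hj => ?_) fun j _ _ => hf j).trans
    (h ((u.map (Function.Embedding.subtype _)).sup id + 1))
  refine Finset.mem_Ico.2 ⟨?_, Nat.lt_succ_of_le (Finset.le_sup (f := id) hj)⟩
  obtain ⟨i, -, rfl⟩ := Finset.mem_map.1 hj
  exact i.2

theorem perfect_packing_P_harmonic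
    (θ : ℝ) (hθ₁ : 0 < θ) (hθ₂ : θ < 1) (Nθ : ℕ) (hNθ : 0 < Nθ)
    (hgap : ∀ n : ℕ, Nθ ≤ n →
      (nthPrime (n + 1) : ℝ) - (nthPrime n : ℝ) ≤ (nthPrime n : ℝ) ^ θ)
    (t : ℝ) (ht₁ : 1 / 2 < t) (ht₂ : t < 1)
    (M N₀ : ℕ) (hM : 0 < M) (hN₀ : 0 < N₀)
    (hMbig : (M : ℝ) ≥
      max ((4 : ℝ) ^ ((1 : ℝ) / (1 - t)) *
          (20 * (2 : ℝ) ^ (6 * t - t ^ 2) * (2 * t - 1) /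
            (3 * (1 - t) ^ 2 * (1 - (2 : ℝ) ^ (1 - 2 * t)))) ^ (2 / (t * (1 - t))))
        ((50 * ((6 : ℝ) / 5) ^ (t * (2 - t))) ^ (2 / (1 - t))))
    (hN₀1 : Nθ ≤ N₀)
    (hN₀2 : (N₀ : ℝ) ≥ 85536 * (M : ℝ) ^ 5)
    (hN₀3 : (N₀ : ℝ) ≥ 3 * 10 ^ 18)
    (hN₀4 : (N₀ : ℝ) ≥ 2 * Real.exp (16 / (1 - t) ^ 4))
    (hN₀5 : (N₀ : ℝ) ≥ 1 / (1 - (2 : ℝ) ^ (-(1 / (2 * t - 1)))))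
    (hN₀6 : (N₀ : ℝ) ≥ (M : ℝ) ^ ((1 : ℝ) / (1 - t) ^ 2))
    (hN₀7 : (N₀ : ℝ) ≥ (40 / 7 * (1 - t) ^ 2) ^ (2 / t) *
      ((2 : ℝ) ^ (1 + 2 * t) / (2 * t - 1)) ^ ((2 - t) / t) * (M : ℝ) ^ ((1 + t) / t))
    (hN₀8 : (N₀ : ℝ) ≥ Real.exp (1 / ((2 * t - 1) * (1 - t)))) :
    ∀ n₀ : ℕ, N₀ ≤ n₀ →
      ∃ (c : ℝ × ℝ) (pos : {n : ℕ // n₀ ≤ n} → ℝ × ℝ),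
        PerfectlyPacked
          (fun n : {n : ℕ // n₀ ≤ n} => square (pos n) ((nthPrime (n : ℕ) : ℝ) ^ (-t)))
          (square c
            (Real.sqrt (∑' n : {n : ℕ // n₀ ≤ n}, (nthPrime (n : ℕ) : ℝ) ^ (-(2 * t))))) := by
  intro n₀ hn₀
  have hN : (N₀ : ℝ) ≤ n₀ := by exact_mod_cast hn₀
  have hn₀0 : (0 : ℝ) < n₀ := by linarith
  have hn1000 : 1000 ≤ n₀ := by
    have : (1000 : ℝ) ≤ n₀ := by linarith
    exact_mod_cast this
  obtain ⟨δ, rfl⟩ : ∃ δ, t = 1 - δ := ⟨1 - t, by ring⟩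
  rw [sub_sub_cancel] at hN₀4 hN₀8
  have hδ : 0 < δ := by linarith
  have hδ₁ : δ ≤ 1 / 2 := by linarith
  have hη : 0 < 2 * (1 - δ) - 1 := by linarith
  set s : ℕ → ℝ := fun n => (nthPrime n : ℝ) ^ (-(1 - δ)) with hs
  have hs0 : ∀ k, 0 < s k := fun k => Real.rpow_pos_of_pos (nthPrime_pos k) _
  have hsq : ∀ k, s k ^ 2 = (nthPrime k : ℝ) ^ (-(2 * (1 - δ))) := nthPrime_rpow_neg_sq _
  have hsum : Summable fun k => s k ^ 2 := by
    simp only [hsq]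
    exact summable_nthPrime_rpow_neg (by linarith)
  have hsum' : Summable fun k : {k // n₀ ≤ k} => s k ^ 2 := hsum.subtype _
  set A : ℝ := ∑' k : {k // n₀ ≤ k}, s k ^ 2 with hA
  have hlow := sum_Ico_le_tsum_subtype (fun k => sq_nonneg (s k)) hsum n₀
  have hA0 : 0 < A := by
    refine lt_of_lt_of_le ?_ (hlow (n₀ + 1))
    rw [Nat.Ico_succ_singleton, Finset.sum_singleton]
    exact pow_pos (hs0 _) 2
  have hlog₁ : 2 / (2 * (1 - δ) - 1) ≤ Real.log n₀ := by
    rw [Real.le_log_iff_exp_le hn₀0]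
    refine (Real.exp_le_exp.2 ?_).trans (hN₀8.le.trans hN)
    rw [div_le_div_iff₀ hη (by positivity)]
    nlinarith
  have hlog₂ : ∀ j, n₀ ≤ j → 1 / (δ ^ 4 / 16) ≤ Real.log (nthPrime j) := by
    intro j hj
    rw [Real.le_log_iff_exp_le (nthPrime_pos j), one_div_div]
    have h₁ : (n₀ : ℝ) ≤ nthPrime j := by exact_mod_cast hj.trans (lt_nthPrime j).le
    linarith [Real.exp_pos (16 / δ ^ 4)]
  have hε : 0 < δ ^ 4 / 16 := by positivity
  have hδ2 : δ ^ 2 ≤ 1 / 4 := by nlinarith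
  have hε₁ : δ ^ 4 / 16 ≤ δ ^ 2 / 2 := by nlinarith [sq_nonneg δ]
  obtain ⟨H, hinit⟩ := slowDecay_of_growth (s := s) (n := n₀) (a := √A) hδ hδ₁ hs0
    (nthPrime_rpow_neg_antitone (by linarith)) (hN₀4.le.trans hN)
    (fun j k hj hjk => nthPrime_rpow_neg_le_mul hε (by nlinarith) (hn1000.trans hj) hjk
      (hlog₂ j hj))
    (fun j k hj hjk => nthPrime_rpow_neg_rpow_le_mul hε hε₁ (by linarith) (hn1000.trans hj) hjk
      (hlog₂ j hj))
    (Real.sqrt_pos.2 hA0) (by rwa [Real.sq_sqrt hA0.le])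
    (by
      rw [Real.sq_sqrt hA0.le, hsq]
      refine tsum_subtype_le_of_sum_Ico_le (fun k => sq_nonneg (s k)) fun k => ?_
      simp only [hsq]
      exact sum_Ico_nthPrime_rpow_neg_le ht₁ ht₂ hn1000 hlog₁ k)
  obtain ⟨pos, hpos⟩ := H.exists_perfectlyPacked hsum' (Real.sq_sqrt hA0.le) hinit
  refine ⟨(0, 0), pos, ?_⟩
  simp only [← hsq]
  exact hpos
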